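/- arXiv:2402.16489 — 3 statements merged into one kernel-verified Lean document; each statement's English description precedes it below -/
import Mathlib

section
/- Let α > 1, β > 1 be real numbers and let σ ∈ [0, min(α, β)]. Then there exists a constant C > 0, depending only on α, β and σ, such that for every integer N ≥ 1 and all points y, x_i, x_j ∈ ℝ^N with x_i ≠ x_j one has (1+|y−x_i|)^{−α}·(1+|y−x_j|)^{−β} ≤ C·|x_i−x_j|^{−σ}·( (1+|y−x_i|)^{−(α+β−σ)} + (1+|y−x_j|)^{−(α+β−σ)} ). -/
/-- If `a ≤ b` and `d ≤ 2 * b`, then `σ` units of the decay in `b` can be traded for decay in `d`,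
and the remaining ones for decay in `a`. -/
lemma rpow_neg_mul_rpow_neg_le {a b d α β σ : ℝ} (ha : 0 < a) (hab : a ≤ b) (hd : 0 < d)
    (hdb : d ≤ 2 * b) (hσ0 : 0 ≤ σ) (hσ : σ ≤ β) :
    a ^ (-α) * b ^ (-β) ≤ 2 ^ σ * d ^ (-σ) * a ^ (-(α + β - σ)) := by
  have hb : 0 < b := ha.trans_le hab
  have hbσ : b ^ (-σ) ≤ 2 ^ σ * d ^ (-σ) := by
    calc b ^ (-σ) ≤ (d / 2) ^ (-σ) :=
          Real.rpow_le_rpow_of_nonpos (by positivity) (by linarith) (by linarith)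
      _ = 2 ^ σ * d ^ (-σ) := by
          rw [Real.div_rpow hd.le zero_le_two, Real.rpow_neg zero_le_two, div_inv_eq_mul, mul_comm]
  have hba : b ^ (-(β - σ)) ≤ a ^ (-(β - σ)) :=
    Real.rpow_le_rpow_of_nonpos ha hab (by linarith)
  calc a ^ (-α) * b ^ (-β) = a ^ (-α) * (b ^ (-σ) * b ^ (-(β - σ))) := by
        rw [← Real.rpow_add hb]; ring_nf
    _ ≤ a ^ (-α) * (2 ^ σ * d ^ (-σ) * a ^ (-(β - σ))) := by gcongr
    _ = 2 ^ σ * d ^ (-σ) * (a ^ (-α) * a ^ (-(β - σ))) := by ring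
    _ = 2 ^ σ * d ^ (-σ) * a ^ (-(α + β - σ)) := by
        rw [← Real.rpow_add ha]; ring_nf

/-- Lemma B.2 of the paper: a pointwise interaction inequality between two
bubble-type weights centered at distinct points. -/
theorem interaction_inequality (α β σ : ℝ) (hα : 1 < α) (hβ : 1 < β)
    (hσ0 : 0 ≤ σ) (hσ : σ ≤ min α β) :
    ∃ C > 0, ∀ N : ℕ, 1 ≤ N → ∀ y xi xj : EuclideanSpace ℝ (Fin N), xi ≠ xj →
      (1 + ‖y - xi‖) ^ (-α) * (1 + ‖y - xj‖) ^ (-β) ≤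
        C * ‖xi - xj‖ ^ (-σ) *
          ((1 + ‖y - xi‖) ^ (-(α + β - σ)) + (1 + ‖y - xj‖) ^ (-(α + β - σ))) := by
  refine ⟨2 ^ σ, by positivity, fun N _ y xi xj hne => ?_⟩
  have hd : 0 < ‖xi - xj‖ := norm_pos_iff.mpr (sub_ne_zero.mpr hne)
  have htri : ‖xi - xj‖ ≤ ‖y - xi‖ + ‖y - xj‖ := by
    simpa [norm_sub_rev xi y] using norm_sub_le_norm_sub_add_norm_sub xi y xj
  have hi : 0 < 1 + ‖y - xi‖ := by positivity
  have hj : 0 < 1 + ‖y - xj‖ := by positivity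
  rw [mul_add]
  rcases le_total ‖y - xi‖ ‖y - xj‖ with h | h
  · exact (rpow_neg_mul_rpow_neg_le hi (by linarith) hd (by linarith) hσ0
      (hσ.trans (min_le_right α β))).trans (le_add_of_nonneg_right (by positivity))
  · rw [mul_comm ((1 + ‖y - xi‖) ^ (-α)), add_comm α β]
    exact (rpow_neg_mul_rpow_neg_le hj (by linarith) hd (by linarith) hσ0
      (hσ.trans (min_le_left α β))).trans (le_add_of_nonneg_left (by positivity))
end

section
/- Let N ≥ 3 be an integer and let σ ∈ (0, N−2). Then there exists a constant C > 0 such that for every y ∈ ℝ^N, ∫_{ℝ^N} |y−z|^{−(N−2)} · (1+|z|)^{−(2+σ)} dz ≤ C·(1+|y|)^{−σ}. -/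
open MeasureTheory

/-- If `s ≤ c * t`, then `t ^ (-a) ≤ c ^ a * s ^ (-a)`. -/
theorem rpow_neg_le_mul_rpow_neg {s t c a : ℝ} (hs : 0 < s) (hc : 0 < c) (ha : 0 ≤ a)
    (h : s ≤ c * t) : t ^ (-a) ≤ c ^ a * s ^ (-a) := by
  calc t ^ (-a) ≤ (s / c) ^ (-a) :=
        Real.rpow_le_rpow_of_nonpos (by positivity) ((div_le_iff₀' hc).2 h) (by linarith)
    _ = c ^ a * s ^ (-a) := by
        rw [Real.div_rpow hs.le hc.le, Real.rpow_neg hc.le, div_inv_eq_mul, mul_comm]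

/-- The function `‖x‖ ^ (-a) * (1 + ‖x‖) ^ (-b)` is integrable when `a` is subcritical at the origin
and `a + b` is supercritical at infinity. -/
theorem integrable_norm_rpow_mul_one_add_norm_rpow {E : Type*} [NormedAddCommGroup E]
    [NormedSpace ℝ E] [FiniteDimensional ℝ E] [MeasurableSpace E] [BorelSpace E]
    (μ : Measure E) [μ.IsAddHaarMeasure] (hd : 1 ≤ Module.finrank ℝ E) {a b : ℝ}
    (ha0 : 0 ≤ a) (ha : a < Module.finrank ℝ E)
    (hab : Module.finrank ℝ E < a + b) :
    Integrable (fun x : E => ‖x‖ ^ (-a) * (1 + ‖x‖) ^ (-b)) μ := by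
  have hmeas : Measurable fun x : E => ‖x‖ ^ (-a) * (1 + ‖x‖) ^ (-b) := by fun_prop
  rw [← integrableOn_univ, ← Set.union_compl_self (Metric.ball (0 : E) 1)]
  refine IntegrableOn.union ?_ ?_
  · refine integrableOn_ball_of_norm_le_rpow (C := 1) (α := a) hd ha
      (Filter.Eventually.of_forall fun x => ?_) hmeas.aestronglyMeasurable
    rw [Real.norm_of_nonneg (by positivity), one_mul]
    exact mul_le_of_le_one_right (by positivity)
      (Real.rpow_le_one_of_one_le_of_nonpos (by linarith [norm_nonneg x]) (by linarith))
  · refine Integrable.mono' ((integrable_one_add_norm (μ := μ) hab).const_mul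
      ((2 : ℝ) ^ a)).integrableOn hmeas.aestronglyMeasurable ?_
    filter_upwards [ae_restrict_mem Metric.isOpen_ball.measurableSet.compl] with x hx
    have hx1 : 1 ≤ ‖x‖ := by simpa using hx
    rw [Real.norm_of_nonneg (by positivity), neg_add, Real.rpow_add (by positivity), ← mul_assoc]
    gcongr
    exact rpow_neg_le_mul_rpow_neg (by positivity) (by norm_num) ha0 (by linarith)

/-- Splitting of the rescaled kernel: for `‖u‖ ≤ 1` one of the factors `‖u - w‖` and
`1 - ‖u‖ + ‖w‖` is at least `1 / 2`, and is then comparable to `1` plus the norm in the other. -/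
theorem rescaled_kernel_le {E : Type*} [NormedAddCommGroup E] {a b : ℝ} (ha : 0 ≤ a) (hb : 0 ≤ b)
    {u w : E} (hu : ‖u‖ ≤ 1) (hw : w ≠ 0) :
    ‖u - w‖ ^ (-a) * (1 - ‖u‖ + ‖w‖) ^ (-b) ≤
      5 ^ a * (‖w‖ ^ (-b) * (1 + ‖w‖) ^ (-a)) +
        5 ^ b * (‖u - w‖ ^ (-a) * (1 + ‖u - w‖) ^ (-b)) := by
  have hw0 : 0 < ‖w‖ := norm_pos_iff.2 hw
  have h_tri : ‖u‖ ≤ ‖u - w‖ + ‖w‖ := by simpa using norm_add_le (u - w) w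
  rcases le_total (1 / 2) ‖u - w‖ with h | h
  · refine le_add_of_le_of_nonneg ?_ (by positivity)
    have h_sub : ‖w‖ ≤ ‖u‖ + ‖u - w‖ := by simpa using norm_sub_le u (u - w)
    calc ‖u - w‖ ^ (-a) * (1 - ‖u‖ + ‖w‖) ^ (-b)
        ≤ (5 ^ a * (1 + ‖w‖) ^ (-a)) * ‖w‖ ^ (-b) :=
          mul_le_mul
            (rpow_neg_le_mul_rpow_neg (by positivity) (by norm_num) ha (by linarith))
            (Real.rpow_le_rpow_of_nonpos hw0 (by linarith) (by linarith))
            (Real.rpow_nonneg (by linarith) _) (by positivity)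
      _ = _ := by ring
  · refine le_add_of_nonneg_of_le (by positivity) ?_
    calc ‖u - w‖ ^ (-a) * (1 - ‖u‖ + ‖w‖) ^ (-b)
        ≤ ‖u - w‖ ^ (-a) * (5 ^ b * (1 + ‖u - w‖) ^ (-b)) := by
          gcongr
          exact rpow_neg_le_mul_rpow_neg (by positivity) (by norm_num) hb (by linarith)
      _ = _ := by ring

/-- First case of Lemma B.3 of the paper: an estimate for the Newtonian-kernel
convolution of a polynomially decaying weight, for `0 < σ < N - 2`. -/
theorem kernel_convolution_estimate_small (N : ℕ) (hN : 3 ≤ N) (σ : ℝ)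
    (hσ0 : 0 < σ) (hσ : σ < (N : ℝ) - 2) :
    ∃ C > 0, ∀ y : EuclideanSpace ℝ (Fin N),
      ∫ z : EuclideanSpace ℝ (Fin N),
          ‖y - z‖ ^ (-((N : ℝ) - 2)) * (1 + ‖z‖) ^ (-(2 + σ)) ≤
        C * (1 + ‖y‖) ^ (-σ) := by
  have : Nonempty (Fin N) := ⟨⟨0, by omega⟩⟩
  set E := EuclideanSpace ℝ (Fin N)
  set a : ℝ := (N : ℝ) - 2 with ha_def
  set b : ℝ := 2 + σ with hb_def
  have ha : 0 ≤ a := by linarith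
  have hb : 0 ≤ b := by linarith
  have hdim : Module.finrank ℝ E = N := finrank_euclideanSpace_fin
  let G : E → ℝ := fun w => ‖w‖ ^ (-b) * (1 + ‖w‖) ^ (-a)
  let H : E → ℝ := fun w => ‖w‖ ^ (-a) * (1 + ‖w‖) ^ (-b)
  have hG : Integrable G := integrable_norm_rpow_mul_one_add_norm_rpow volume (by omega) hb
    (by rw [hdim]; linarith) (by rw [hdim]; linarith)
  have hH : Integrable H := integrable_norm_rpow_mul_one_add_norm_rpow volume (by omega) ha
    (by rw [hdim]; linarith) (by rw [hdim]; linarith)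
  have hG0 : 0 ≤ ∫ w, G w := integral_nonneg fun w => by positivity
  have hH0 : 0 ≤ ∫ w, H w := integral_nonneg fun w => by positivity
  refine ⟨5 ^ a * (∫ w, G w) + 5 ^ b * (∫ w, H w) + 1, by positivity, fun y => ?_⟩
  set R : ℝ := 1 + ‖y‖ with hR_def
  have hR : 0 < R := by positivity
  set u : E := R⁻¹ • y with hu_def
  have hu_norm : ‖u‖ = R⁻¹ * ‖y‖ := by rw [hu_def, norm_smul, Real.norm_of_nonneg (by positivity)]
  have hRu : R * (1 - ‖u‖) = 1 := by rw [hu_norm]; field_simp; linarith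
  have hu : ‖u‖ ≤ 1 := by nlinarith
  have h_scale (w : E) : ‖y - R • w‖ ^ (-a) * (1 + ‖R • w‖) ^ (-b) =
      R ^ (-(N + σ)) * (‖u - w‖ ^ (-a) * (1 - ‖u‖ + ‖w‖) ^ (-b)) := by
    have h_left : y - R • w = R • (u - w) := by
      rw [smul_sub, hu_def, smul_inv_smul₀ hR.ne']
    have h_right : 1 + ‖R • w‖ = R * (1 - ‖u‖ + ‖w‖) := by
      rw [norm_smul, Real.norm_of_nonneg hR.le, mul_add, hRu]
    rw [h_right, h_left, norm_smul, Real.norm_of_nonneg hR.le,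
      Real.mul_rpow hR.le (norm_nonneg _),
      Real.mul_rpow hR.le (by linarith [norm_nonneg w]),
      show -(N + σ) = -a + -b by rw [ha_def, hb_def]; ring, Real.rpow_add hR]
    ring
  have h_bound : ∫ w : E, ‖u - w‖ ^ (-a) * (1 - ‖u‖ + ‖w‖) ^ (-b) ≤
      5 ^ a * (∫ w, G w) + 5 ^ b * (∫ w, H w) := by
    have hHu : Integrable fun w => H (u - w) := hH.comp_sub_left u
    calc ∫ w : E, ‖u - w‖ ^ (-a) * (1 - ‖u‖ + ‖w‖) ^ (-b)
        ≤ ∫ w, (5 ^ a * G w + 5 ^ b * H (u - w)) := by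
          refine integral_mono_of_nonneg (Filter.Eventually.of_forall fun w => ?_)
            ((hG.const_mul _).add (hHu.const_mul _)) ?_
          · exact mul_nonneg (by positivity) (Real.rpow_nonneg (by linarith [norm_nonneg w]) _)
          · filter_upwards [Measure.ae_ne volume (0 : E)] with w hw
            exact rescaled_kernel_le ha hb hu hw
      _ = _ := by
          rw [integral_add (hG.const_mul _) (hHu.const_mul _), integral_const_mul,
            integral_const_mul, integral_sub_left_eq_self H volume u]
  have h_subst := Measure.integral_comp_smul_of_nonneg (volume : Measure E)
    (fun z => ‖y - z‖ ^ (-a) * (1 + ‖z‖) ^ (-b)) R (hR := hR.le)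
  simp only [h_scale, integral_const_mul, hdim, smul_eq_mul] at h_subst
  rw [eq_inv_mul_iff_mul_eq₀ (by positivity), ← mul_assoc, ← Real.rpow_natCast,
    ← Real.rpow_add hR, show (N : ℝ) + -(N + σ) = -σ by ring] at h_subst
  rw [← h_subst, mul_comm]
  gcongr
  linarith
end

section
/- Let N ≥ 3 be an integer and let σ > N−2 be a real number. Then there exists a constant C > 0 such that for every y ∈ ℝ^N, ∫_{ℝ^N} |y−z|^{−(N−2)} · (1+|z|)^{−(2+σ)} dz ≤ C·(1+|y|)^{−(N−2)}. -/
open MeasureTheory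

section RieszKernel

open Metric Set Module

variable {E : Type*} [NormedAddCommGroup E] [NormedSpace ℝ E] [FiniteDimensional ℝ E]
  [MeasurableSpace E] [BorelSpace E] (μ : Measure E) [μ.IsAddHaarMeasure]

/-- A power of the norm of order greater than minus the dimension is integrable on the unit ball. -/
theorem integrableOn_norm_rpow_neg_ball {a : ℝ} (ha₀ : 0 ≤ a) (ha : a < finrank ℝ E) :
    IntegrableOn (fun x : E ↦ ‖x‖ ^ (-a)) (ball 0 1) μ := by
  have hd : 0 < finrank ℝ E := by exact_mod_cast ha₀.trans_lt ha
  have : Nontrivial E := finrank_pos_iff.mp hd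
  rw [integrableOn_fun_norm_addHaar μ (f := fun r : ℝ ↦ r ^ (-a))]
  have h : IntegrableOn (fun r : ℝ ↦ r ^ ((finrank ℝ E : ℝ) - 1 - a)) (Ioo 0 1) := by
    rw [← integrableOn_Ioc_iff_integrableOn_Ioo,
      ← intervalIntegrable_iff_integrableOn_Ioc_of_le zero_le_one]
    exact intervalIntegral.intervalIntegrable_rpow' (by linarith)
  refine h.congr_fun (fun r hr ↦ ?_) measurableSet_Ioo
  have hcast : ((finrank ℝ E - 1 : ℕ) : ℝ) = (finrank ℝ E : ℝ) - 1 := by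
    rw [Nat.cast_sub hd, Nat.cast_one]
  simp only [smul_eq_mul]
  rw [← Real.rpow_natCast, ← Real.rpow_add hr.1, hcast, sub_eq_add_neg _ a]

/-- Splitting according to whether `‖y - z‖` is smaller than half of `1 + ‖y‖` bounds the
integrand of the Riesz potential of a decaying weight. -/
theorem norm_sub_rpow_mul_one_add_norm_rpow_le {F : Type*} [NormedAddCommGroup F]
    [NormedSpace ℝ F] {a b : ℝ} (ha : 0 ≤ a) (hb : 0 ≤ b) {ρ : ℝ} {y : F}
    (hρ : ρ = (1 + ‖y‖) / 2) (z : F) :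
    ‖y - z‖ ^ (-a) * (1 + ‖z‖) ^ (-b) ≤
      ρ ^ (-a) * ((1 + ‖z‖) ^ (-b) +
        ρ ^ (-b) * (ball (0 : F) 1).indicator (fun x ↦ ‖x‖ ^ (-a)) (ρ⁻¹ • (y - z))) := by
  have hρ₀ : 0 < ρ := by rw [hρ]; positivity
  have hz : 0 < 1 + ‖z‖ := by positivity
  have hnorm : ‖ρ⁻¹ • (y - z)‖ = ρ⁻¹ * ‖y - z‖ := by
    rw [norm_smul, Real.norm_of_nonneg (by positivity)]
  rcases lt_or_ge ‖y - z‖ ρ with hlt | hge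
  · have hmem : ρ⁻¹ • (y - z) ∈ ball (0 : F) 1 := by
      rw [mem_ball_zero_iff, hnorm, inv_mul_lt_iff₀ hρ₀, mul_one]
      exact hlt
    have hsplit : ρ ^ (-a) * ‖ρ⁻¹ • (y - z)‖ ^ (-a) = ‖y - z‖ ^ (-a) := by
      rw [← Real.mul_rpow hρ₀.le (norm_nonneg _), hnorm, mul_inv_cancel_left₀ hρ₀.ne']
    have hρz : ρ ≤ 1 + ‖z‖ := by
      have := norm_le_norm_add_norm_sub' y z
      linarith
    rw [indicator_of_mem hmem]
    calc ‖y - z‖ ^ (-a) * (1 + ‖z‖) ^ (-b)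
        ≤ ‖y - z‖ ^ (-a) * ρ ^ (-b) := mul_le_mul_of_nonneg_left
          (Real.rpow_le_rpow_of_nonpos hρ₀ hρz (by linarith)) (by positivity)
      _ = ρ ^ (-a) * (ρ ^ (-b) * ‖ρ⁻¹ • (y - z)‖ ^ (-a)) := by rw [← hsplit]; ring
      _ ≤ _ := mul_le_mul_of_nonneg_left (le_add_of_nonneg_left (by positivity)) (by positivity)
  · have hind : 0 ≤ (ball (0 : F) 1).indicator (fun x ↦ ‖x‖ ^ (-a)) (ρ⁻¹ • (y - z)) :=
      indicator_nonneg (fun x _ ↦ by positivity) _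
    calc ‖y - z‖ ^ (-a) * (1 + ‖z‖) ^ (-b)
        ≤ ρ ^ (-a) * (1 + ‖z‖) ^ (-b) := mul_le_mul_of_nonneg_right
          (Real.rpow_le_rpow_of_nonpos hρ₀ hge (by linarith)) (by positivity)
      _ ≤ _ := mul_le_mul_of_nonneg_left (le_add_of_nonneg_right (by positivity)) (by positivity)

/-- The Riesz potential of a weight decaying faster than the inverse of the volume decays like
the Riesz kernel. -/
theorem exists_integral_norm_sub_rpow_mul_one_add_norm_rpow_le {a b : ℝ} (ha₀ : 0 ≤ a)
    (ha : a < finrank ℝ E) (hb : finrank ℝ E < b) :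
    ∃ C > 0, ∀ y : E,
      ∫ z, ‖y - z‖ ^ (-a) * (1 + ‖z‖) ^ (-b) ∂μ ≤ C * (1 + ‖y‖) ^ (-a) := by
  set d := finrank ℝ E
  have hb₀ : 0 ≤ b := (Nat.cast_nonneg d).trans hb.le
  let f : E → ℝ := (ball (0 : E) 1).indicator (fun x ↦ ‖x‖ ^ (-a))
  have hf : Integrable f μ :=
    (integrable_indicator_iff measurableSet_ball).mpr (integrableOn_norm_rpow_neg_ball μ ha₀ ha)
  have hf₀ : 0 ≤ ∫ x, f x ∂μ :=
    integral_nonneg fun x ↦ indicator_nonneg (fun x _ ↦ by positivity) x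
  have hw : Integrable (fun z : E ↦ (1 + ‖z‖) ^ (-b)) μ := integrable_one_add_norm hb
  have hw₀ : 0 ≤ ∫ z, (1 + ‖z‖) ^ (-b) ∂μ := integral_nonneg fun z ↦ by positivity
  refine ⟨2 ^ a * (∫ z, (1 + ‖z‖) ^ (-b) ∂μ + 2 ^ (b - d) * ∫ x, f x ∂μ) + 1, by positivity,
    fun y ↦ ?_⟩
  obtain ⟨ρ, hρ⟩ : ∃ ρ, ρ = (1 + ‖y‖) / 2 := ⟨_, rfl⟩
  have hρ₀ : 0 < ρ := by rw [hρ]; positivity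
  have hρ_half : 2⁻¹ ≤ ρ := by
    have := norm_nonneg y
    linarith
  have hfy : Integrable (fun z ↦ f (ρ⁻¹ • (y - z))) μ :=
    ((integrable_comp_smul_iff μ f (inv_ne_zero hρ₀.ne')).mpr hf).comp_sub_left y
  have hscale : ∫ z, f (ρ⁻¹ • (y - z)) ∂μ = ρ ^ (d : ℝ) * ∫ x, f x ∂μ := by
    rw [integral_sub_left_eq_self (fun x ↦ f (ρ⁻¹ • x)) μ y,
      Measure.integral_comp_inv_smul_of_nonneg μ f hρ₀.le, smul_eq_mul, Real.rpow_natCast]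
  have hdecay : ρ ^ (-b) * ρ ^ (d : ℝ) ≤ 2 ^ (b - d) := by
    rw [← Real.rpow_add hρ₀]
    calc ρ ^ (-b + d) ≤ (2⁻¹ : ℝ) ^ (-b + d) :=
          Real.rpow_le_rpow_of_nonpos (by norm_num) hρ_half (by linarith)
      _ = 2 ^ (b - d) := by
          rw [Real.inv_rpow (by norm_num), ← Real.rpow_neg (by norm_num)]
          congr 1
          ring
  have hρa : ρ ^ (-a) = 2 ^ a * (1 + ‖y‖) ^ (-a) := by
    rw [hρ, Real.div_rpow (by positivity) (by norm_num), Real.rpow_neg zero_le_two, div_inv_eq_mul,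
      mul_comm]
  calc ∫ z, ‖y - z‖ ^ (-a) * (1 + ‖z‖) ^ (-b) ∂μ
      ≤ ∫ z, ρ ^ (-a) * ((1 + ‖z‖) ^ (-b) + ρ ^ (-b) * f (ρ⁻¹ • (y - z))) ∂μ :=
        integral_mono_of_nonneg (.of_forall fun z ↦ by positivity)
          ((hw.add (hfy.const_mul _)).const_mul _)
          (.of_forall (norm_sub_rpow_mul_one_add_norm_rpow_le ha₀ hb₀ hρ))
    _ = ρ ^ (-a) * (∫ z, (1 + ‖z‖) ^ (-b) ∂μ + ρ ^ (-b) * ρ ^ (d : ℝ) * ∫ x, f x ∂μ) := by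
        rw [integral_const_mul, integral_add hw (hfy.const_mul _), integral_const_mul, hscale,
          mul_assoc]
    _ ≤ ρ ^ (-a) * (∫ z, (1 + ‖z‖) ^ (-b) ∂μ + 2 ^ (b - d) * ∫ x, f x ∂μ) := by gcongr
    _ = 2 ^ a * (∫ z, (1 + ‖z‖) ^ (-b) ∂μ + 2 ^ (b - d) * ∫ x, f x ∂μ) * (1 + ‖y‖) ^ (-a) := by
        rw [hρa]; ring
    _ ≤ _ := mul_le_mul_of_nonneg_right (le_add_of_nonneg_right zero_le_one) (by positivity)

end RieszKernel

/-- Second case of Lemma B.3 of the paper: an estimate for the Newtonian-kernel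
convolution of a polynomially decaying weight, for `σ > N - 2`. -/
theorem kernel_convolution_estimate_large (N : ℕ) (hN : 3 ≤ N) (σ : ℝ)
    (hσ : (N : ℝ) - 2 < σ) :
    ∃ C > 0, ∀ y : EuclideanSpace ℝ (Fin N),
      ∫ z : EuclideanSpace ℝ (Fin N),
          ‖y - z‖ ^ (-((N : ℝ) - 2)) * (1 + ‖z‖) ^ (-(2 + σ)) ≤
        C * (1 + ‖y‖) ^ (-((N : ℝ) - 2)) := by
  have hN' : (3 : ℝ) ≤ N := by exact_mod_cast hN
  apply exists_integral_norm_sub_rpow_mul_one_add_norm_rpow_le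
  · linarith
  · rw [finrank_euclideanSpace_fin]
    linarith
  · rw [finrank_euclideanSpace_fin]
    linarith
end
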